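/- arXiv:0803.1276 — 2 statements merged into one kernel-verified Lean document; each statement's English description precedes it below -/
import Mathlib

section
/- For |z| < 1 and γ not a nonpositive integer, the Euler transformation holds: F(α,β;γ;z) = (1-z)^{γ-α-β} F(γ-α, γ-β; γ; z). -/
open Real Filter MeasureTheory

/-- The Gauss hypergeometric function `F(α, β; γ; z)`, defined by its power series. -/
noncomputable def hypF (α β γ z : ℝ) : ℝ :=
  ∑' i : ℕ, ((ascPochhammer ℝ i).eval α * (ascPochhammer ℝ i).eval β /
      (ascPochhammer ℝ i).eval γ) * z ^ i / (Nat.factorial i)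

/-!
By the binomial series, the Euler transformation says that the Cauchy product of
`∑ (c - a - b)ₙ / n! * zⁿ` and the series of `F(a, b; c; z)` is the series of
`F(c - a, c - b; c; z)`. Comparing coefficients gives the Pfaff–Saalschütz identity, which follows
by induction: by the two-term recurrences of the factors, the coefficients of the product satisfy
`(n + 1) (c + n) wₙ₊₁ = (c - a + n) (c - b + n) wₙ`.
-/

open Finset.HasAntidiagonal (antidiagonal mem_antidiagonal)

section Coefficients

theorem succ_mul_multichoose_succ {R : Type*} [CommRing R] [BinomialRing R] (r : R) (n : ℕ) :
    ((n : R) + 1) * Ring.multichoose r (n + 1) = (r + n) * Ring.multichoose r n := by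
  have := BinomialRing.toIsAddTorsionFree (R := R)
  have factorial_mul_multichoose (m : ℕ) :
      (m.factorial : R) * Ring.multichoose r m = (ascPochhammer R m).eval r := by
    rw [← nsmul_eq_mul, Ring.factorial_nsmul_multichoose_eq_ascPochhammer,
      Polynomial.ascPochhammer_smeval_eq_eval]
  have hrec := factorial_mul_multichoose (n + 1)
  rw [ascPochhammer_succ_eval, ← factorial_mul_multichoose, Nat.factorial_succ] at hrec
  rw [← nsmul_right_inj n.factorial_ne_zero, nsmul_eq_mul, nsmul_eq_mul]
  push_cast at hrec
  linear_combination hrec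

variable {K : Type*} [Field K] [CharZero K]

theorem succ_mul_ordinaryHypergeometricCoefficient_succ (a b : K) {c : K} {n : ℕ}
    (hc : c + n ≠ 0) :
    ((n : K) + 1) * (c + n) * ordinaryHypergeometricCoefficient a b c (n + 1) =
      (a + n) * (b + n) * ordinaryHypergeometricCoefficient a b c n := by
  have hn : (n : K) + 1 ≠ 0 := n.cast_add_one_ne_zero
  simp only [ordinaryHypergeometricCoefficient, ascPochhammer_succ_eval, Nat.factorial_succ,
    Nat.cast_mul, Nat.cast_succ, mul_inv]
  field_simp

theorem sum_antidiagonal_mul_multichoose_succ (a b : K) {c : K} (hc : ∀ m : ℕ, c ≠ -m) (n : ℕ) :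
    ((n : K) + 1) * (c + n) * ∑ p ∈ antidiagonal (n + 1),
        ordinaryHypergeometricCoefficient a b c p.1 * Ring.multichoose (c - a - b) p.2 =
      (c - a + n) * (c - b + n) * ∑ p ∈ antidiagonal n,
        ordinaryHypergeometricCoefficient a b c p.1 * Ring.multichoose (c - a - b) p.2 := by
  set u := ordinaryHypergeometricCoefficient a b c
  set v := Ring.multichoose (c - a - b)
  have hu (k : ℕ) : ((k : K) + 1) * (c + k) * u (k + 1) = (a + k) * (b + k) * u k :=
    succ_mul_ordinaryHypergeometricCoefficient_succ a b fun h ↦ hc k (eq_neg_of_add_eq_zero_left h)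
  have hv (j : ℕ) : ((j : K) + 1) * v (j + 1) = (c - a - b + j) * v j :=
    succ_mul_multichoose_succ _ j
  have shift_left : ∑ p ∈ antidiagonal (n + 1), (p.1 : K) * (c + p.1 - 1) * u p.1 * v p.2 =
      ∑ p ∈ antidiagonal n, (a + p.1) * (b + p.1) * u p.1 * v p.2 := by
    rw [Finset.Nat.sum_antidiagonal_succ]
    simp only [Nat.cast_zero, zero_mul, zero_add, Nat.cast_succ]
    refine Finset.sum_congr rfl fun p _ ↦ ?_
    linear_combination v p.2 * hu p.1
  have shift_right : ∑ p ∈ antidiagonal (n + 1), (c + n + p.1) * u p.1 * (p.2 * v p.2) =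
      ∑ p ∈ antidiagonal n, (c + n + p.1) * u p.1 * ((c - a - b + p.2) * v p.2) := by
    rw [Finset.Nat.sum_antidiagonal_succ']
    simp only [Nat.cast_zero, zero_mul, mul_zero, zero_add, Nat.cast_succ, hv]
  calc
    _ = ∑ p ∈ antidiagonal (n + 1), (p.1 : K) * (c + p.1 - 1) * u p.1 * v p.2 +
        ∑ p ∈ antidiagonal (n + 1), (c + n + p.1) * u p.1 * (p.2 * v p.2) := by
      rw [Finset.mul_sum, ← Finset.sum_add_distrib]
      refine Finset.sum_congr rfl fun p hp ↦ ?_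
      have hp : (p.1 : K) + p.2 = n + 1 := mod_cast mem_antidiagonal.1 hp
      linear_combination -(c + n + p.1) * u p.1 * v p.2 * hp
    _ = _ := by
      rw [shift_left, shift_right, Finset.mul_sum, ← Finset.sum_add_distrib]
      refine Finset.sum_congr rfl fun p hp ↦ ?_
      have hp : (p.1 : K) + p.2 = n := mod_cast mem_antidiagonal.1 hp
      linear_combination (c + n + p.1) * u p.1 * v p.2 * hp

/-- The **Pfaff–Saalschütz identity**, in convolution form. -/
theorem sum_antidiagonal_ordinaryHypergeometricCoefficient_mul_multichoose (a b : K) {c : K}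
    (hc : ∀ m : ℕ, c ≠ -m) (n : ℕ) :
    ∑ p ∈ antidiagonal n,
        ordinaryHypergeometricCoefficient a b c p.1 * Ring.multichoose (c - a - b) p.2 =
      ordinaryHypergeometricCoefficient (c - a) (c - b) c n := by
  induction n with
  | zero => simp
  | succ n ih =>
    have hcn : c + n ≠ 0 := fun h ↦ hc n (eq_neg_of_add_eq_zero_left h)
    apply mul_left_cancel₀ (mul_ne_zero n.cast_add_one_ne_zero hcn)
    rw [sum_antidiagonal_mul_multichoose_succ a b hc, ih,
      succ_mul_ordinaryHypergeometricCoefficient_succ _ _ hcn]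

end Coefficients

section Convergence

variable {𝕂 : Type*} [RCLike 𝕂] (a b c : 𝕂)

theorem one_le_radius_ordinaryHypergeometricSeries (𝔸 : Type*) [NormedDivisionRing 𝔸]
    [NormedAlgebra 𝕂 𝔸] :
    1 ≤ (ordinaryHypergeometricSeries 𝔸 a b c).radius := by
  by_cases h : ∀ k : ℕ, ↑k ≠ -a ∧ ↑k ≠ -b ∧ ↑k ≠ -c
  · exact (ordinaryHypergeometricSeries_radius_eq_one 𝔸 a b c h).ge
  · simp only [not_forall, not_and_or, not_not, eq_comm (a := Nat.cast _), neg_eq_iff_eq_neg] at h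
    obtain ⟨k, rfl | rfl | rfl⟩ := h
    · simp [ordinaryHypergeometric_radius_top_of_neg_nat₁]
    · simp [ordinaryHypergeometric_radius_top_of_neg_nat₂]
    · simp [ordinaryHypergeometric_radius_top_of_neg_nat₃]

theorem mem_eball_zero_one {E : Type*} [SeminormedAddCommGroup E] {x : E} :
    x ∈ Metric.eball (0 : E) 1 ↔ ‖x‖ < 1 := by
  rw [← ENNReal.ofReal_one, Metric.eball_ofReal, mem_ball_zero_iff]

theorem summable_norm_ordinaryHypergeometricCoefficient_mul_pow {z : 𝕂} (hz : ‖z‖ < 1) :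
    Summable fun n ↦ ‖ordinaryHypergeometricCoefficient a b c n * z ^ n‖ := by
  have hz_radius := Metric.eball_subset_eball (one_le_radius_ordinaryHypergeometricSeries a b c 𝕂)
    (mem_eball_zero_one.2 hz)
  simpa only [ordinaryHypergeometricSeries_apply_eq, smul_eq_mul] using
    (ordinaryHypergeometricSeries 𝕂 a b c).summable_norm_apply hz_radius

theorem summable_norm_multichoose_mul_pow (s : ℂ) {z : ℂ} (hz : ‖z‖ < 1) :
    Summable fun n ↦ ‖Ring.multichoose s n * z ^ n‖ := by
  have hf := Complex.one_div_one_sub_cpow_hasFPowerSeriesOnBall_zero s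
  simpa only [FormalMultilinearSeries.ofScalars_apply_eq, ← Ring.multichoose_eq, smul_eq_mul] using
    FormalMultilinearSeries.summable_norm_apply _
      (Metric.eball_subset_eball hf.r_le (mem_eball_zero_one.2 hz))

theorem tsum_multichoose_mul_pow (s : ℂ) {z : ℂ} (hz : ‖z‖ < 1) :
    ∑' n, Ring.multichoose s n * z ^ n = 1 / (1 - z) ^ s := by
  have hf := Complex.one_div_one_sub_cpow_hasFPowerSeriesOnBall_zero s
  simpa only [FormalMultilinearSeries.ofScalars_apply_eq, ← Ring.multichoose_eq, smul_eq_mul,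
    zero_add] using (hf.hasSum (mem_eball_zero_one.2 hz)).tsum_eq

end Convergence

theorem ordinaryHypergeometric_mul_tsum_multichoose (a b : ℂ) {c z : ℂ} (hz : ‖z‖ < 1)
    (hc : ∀ m : ℕ, c ≠ -m) :
    ₂F₁ a b c z * ∑' n, Ring.multichoose (c - a - b) n * z ^ n = ₂F₁ (c - a) (c - b) c z := by
  have hF (a b : ℂ) : ₂F₁ a b c z = ∑' n, ordinaryHypergeometricCoefficient a b c n * z ^ n :=
    ordinaryHypergeometric_sum_eq a b c z
  rw [hF, hF, tsum_mul_tsum_eq_tsum_sum_antidiagonal_of_summable_norm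
    (summable_norm_ordinaryHypergeometricCoefficient_mul_pow a b c hz)
    (summable_norm_multichoose_mul_pow _ hz)]
  refine tsum_congr fun n ↦ ?_
  rw [← sum_antidiagonal_ordinaryHypergeometricCoefficient_mul_multichoose a b hc, Finset.sum_mul]
  refine Finset.sum_congr rfl fun p hp ↦ ?_
  rw [← mem_antidiagonal.1 hp, pow_add, mul_mul_mul_comm]

theorem stmt_5_general (a b c z : ℂ) (hz : ‖z‖ < 1) (hc : ∀ m : ℕ, c ≠ -m) :
    ₂F₁ a b c z = (1 - z) ^ (c - a - b) * ₂F₁ (c - a) (c - b) c z := by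
  have hz1 : 1 - z ≠ 0 := sub_ne_zero.2 (by rintro rfl; simp at hz)
  have hpow : (1 - z) ^ (c - a - b) ≠ 0 := by simp [Complex.cpow_eq_zero_iff, hz1]
  rw [← ordinaryHypergeometric_mul_tsum_multichoose a b hz hc, tsum_multichoose_mul_pow _ hz]
  field_simp

theorem ofReal_hypF (α β γ z : ℝ) : (hypF α β γ z : ℂ) = ₂F₁ (α : ℂ) β γ (z : ℂ) := by
  have ofReal_eval_ascPochhammer (x : ℝ) (n : ℕ) :
      (((ascPochhammer ℝ n).eval x : ℝ) : ℂ) = (ascPochhammer ℂ n).eval (x : ℂ) := by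
    rw [ascPochhammer_eval₂ Complex.ofRealHom]
    exact (Polynomial.eval₂_at_apply Complex.ofRealHom x).symm
  simp only [hypF, ordinaryHypergeometric_eq_tsum, Complex.ofReal_tsum, smul_eq_mul]
  refine tsum_congr fun n ↦ ?_
  push_cast [ofReal_eval_ascPochhammer]
  ring

theorem stmt_5 (α β γ z : ℝ) (hz : |z| < 1) (hγ : ∀ m : ℕ, γ ≠ -(m : ℝ)) :
    hypF α β γ z = (1 - z) ^ (γ - α - β) * hypF (γ - α) (γ - β) γ z := by
  have hz1 : 0 ≤ 1 - z := sub_nonneg.2 (abs_lt.1 hz).2.le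
  apply Complex.ofReal_injective
  push_cast [ofReal_hypF, Complex.ofReal_cpow hz1]
  exact stmt_5_general α β γ z (by simpa using hz) fun m ↦ mod_cast hγ m
end

section
/- Assume e > -p/2 - n/2 - 1, -p/2 - 1 < a < n/2 + e, and -1 < b < min(n/2+e-a-1, 0). Then for all w > 0, w·φ'(w)/φ(w) ≥ (p/2 + a + 2)·b/(b+1). -/
open Real Filter MeasureTheory

/-!
Write `E α β c` for the Euler integral `∫₀¹ x ^ α (1 - x) ^ β (1 + w x) ^ (-c)`, so that
`φ = w E (α + 1) β c / E α β c` with `α = p / 2 + a`. Put `A = E α β c`, `B = E (α + 1) β c`,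
`P = E (α + 1) β (c + 1)` and `Q = E (α + 2) β (c + 1)`. Differentiating under the integral sign,
the elasticity `w φ' / φ` is `1 - c w Q / B + c w P / A`, and integration by parts rewrites it as
`-β + (α + 1 - c w P / A) (A / B - 1)`.

Since `B ≤ A`, the second form is at least `-β ≥ 0` as long as `c w P / A ≤ α + 1`. Otherwise the
first form together with `(β + 1) c w Q ≤ (α + 2) B` gives the bound. This last inequality comes
from the convexity of `g x = (1 + w x) ^ (-c)`: integrate by parts against the slope
`(g x - g 1) / (x - 1)`, which dominates `g' x`.
-/

section DSlope

variable {𝕜 : Type*} [NontriviallyNormedField 𝕜]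

lemma continuousOn_dslope_of_differentiableAt {E : Type*} [NormedAddCommGroup E]
    [NormedSpace 𝕜 E] {g : 𝕜 → E} {s : Set 𝕜} (a : 𝕜) (hg : ∀ x ∈ s, DifferentiableAt 𝕜 g x) :
    ContinuousOn (dslope g a) s := by
  intro x hx
  refine ContinuousAt.continuousWithinAt ?_
  rcases eq_or_ne x a with rfl | hne
  · exact continuousAt_dslope_same.2 (hg x hx)
  · exact (continuousAt_dslope_of_ne hne).2 (hg x hx).continuousAt

lemma hasDerivAt_dslope_of_ne {g : 𝕜 → 𝕜} {a d x : 𝕜} (hx : x ≠ a) (hg : HasDerivAt g d x) :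
    HasDerivAt (dslope g a) ((d - dslope g a x) / (x - a)) x := by
  have hne : x - a ≠ 0 := sub_ne_zero.2 hx
  have hquot := (hg.sub_const (g a)).div ((hasDerivAt_id x).sub_const a) hne
  refine (hquot.congr_of_eventuallyEq ?_).congr_deriv ?_
  · filter_upwards [dslope_eventuallyEq_slope_of_ne g hx] with y hy
    rw [hy, slope_def_field, Pi.div_apply, id]
  · rw [dslope_of_ne g hx, slope_def_field, id]
    field_simp

end DSlope

section BetaWeight

/-- The unnormalised density of the beta distribution. The exponents are not shifted by one, so
integrability on `(0, 1)` means `-1 < α` and `-1 < β`. -/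
noncomputable def betaWeight (α β x : ℝ) : ℝ := x ^ α * (1 - x) ^ β

variable {α β x : ℝ} {f f' g g' : ℝ → ℝ}

lemma betaWeight_pos (hx : x ∈ Set.Ioo (0 : ℝ) 1) : 0 < betaWeight α β x :=
  mul_pos (rpow_pos_of_pos hx.1 α) (rpow_pos_of_pos (sub_pos.2 hx.2) β)

lemma betaWeight_add_one_left (hx : x ≠ 0) : betaWeight (α + 1) β x = betaWeight α β x * x := by
  rw [betaWeight, betaWeight, rpow_add_one hx]
  ring

lemma betaWeight_add_one_right (hx : x ≠ 1) :
    betaWeight α (β + 1) x = betaWeight α β x * (1 - x) := by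
  rw [betaWeight, betaWeight, rpow_add_one (sub_ne_zero.2 hx.symm)]
  ring

lemma hasDerivAt_betaWeight (hx : x ∈ Set.Ioo (0 : ℝ) 1) :
    HasDerivAt (betaWeight (α + 1) (β + 1))
      (betaWeight α β x * ((α + 1) - (α + β + 2) * x)) x := by
  have hx₁ : 1 - x ≠ 0 := (sub_pos.2 hx.2).ne'
  have hleft := hasDerivAt_rpow_const (p := α + 1) (Or.inl hx.1.ne')
  have hright := ((hasDerivAt_id x).const_sub 1).rpow_const (p := β + 1) (Or.inl hx₁)
  refine (hleft.mul hright).congr_deriv ?_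
  simp only [betaWeight, id, add_sub_cancel_right, rpow_add_one hx.1.ne', rpow_add_one hx₁]
  ring

lemma intervalIntegrable_betaWeight (hα : -1 < α) (hβ : -1 < β) :
    IntervalIntegrable (betaWeight α β) volume 0 1 := by
  have hconv := Complex.betaIntegral_convergent (u := ((α + 1 : ℝ) : ℂ)) (v := ((β + 1 : ℝ) : ℂ))
    (by rw [Complex.ofReal_re]; linarith) (by rw [Complex.ofReal_re]; linarith)
  refine hconv.norm.congr_uIoo fun x hx => ?_
  rw [Set.uIoo_of_le zero_le_one] at hx
  have hcast : (1 : ℂ) - x = ((1 - x : ℝ) : ℂ) := by push_cast; rfl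
  simp only [betaWeight, hcast, norm_mul, Complex.norm_cpow_eq_rpow_re_of_pos hx.1,
    Complex.norm_cpow_eq_rpow_re_of_pos (sub_pos.2 hx.2), Complex.sub_re, Complex.ofReal_re,
    Complex.one_re, add_sub_cancel_right]

lemma intervalIntegrable_betaWeight_mul (hα : -1 < α) (hβ : -1 < β)
    (hf : ContinuousOn f (Set.Icc 0 1)) :
    IntervalIntegrable (fun x => betaWeight α β x * f x) volume 0 1 :=
  (intervalIntegrable_betaWeight hα hβ).mul_continuousOn (by rwa [Set.uIcc_of_le zero_le_one])

lemma integral_betaWeight_mul_deriv (hα : -1 < α) (hβ : -1 < β)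
    (hf : ContinuousOn f (Set.Icc 0 1)) (hderiv : ∀ x ∈ Set.Ioo (0 : ℝ) 1, HasDerivAt f (f' x) x)
    (hint : IntervalIntegrable (fun x => betaWeight (α + 1) (β + 1) x * f' x) volume 0 1) :
    ∫ x in (0 : ℝ)..1, betaWeight (α + 1) (β + 1) x * f' x =
      ∫ x in (0 : ℝ)..1, betaWeight α β x * (((α + β + 2) * x - (α + 1)) * f x) := by
  have hint₀ : IntervalIntegrable
      (fun x => betaWeight α β x * (((α + β + 2) * x - (α + 1)) * f x)) volume 0 1 :=
    intervalIntegrable_betaWeight_mul hα hβ (by fun_prop)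
  have hcont : Continuous (betaWeight (α + 1) (β + 1)) :=
    (continuous_rpow_const (by linarith)).mul
      ((continuous_rpow_const (by linarith)).comp (continuous_const.sub continuous_id))
  have hftc := intervalIntegral.integral_eq_sub_of_hasDerivAt_of_le zero_le_one
    (hcont.continuousOn.mul hf)
    (fun x hx => ((hasDerivAt_betaWeight hx).mul (hderiv x hx)).congr_deriv
      (show _ = betaWeight (α + 1) (β + 1) x * f' x -
        betaWeight α β x * (((α + β + 2) * x - (α + 1)) * f x) by ring))
    (hint.sub hint₀)
  have hzero : betaWeight (α + 1) (β + 1) 0 = 0 := by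
    simp [betaWeight, zero_rpow (show α + 1 ≠ 0 by linarith)]
  have hone : betaWeight (α + 1) (β + 1) 1 = 0 := by
    simp [betaWeight, zero_rpow (show β + 1 ≠ 0 by linarith)]
  rw [intervalIntegral.integral_sub hint hint₀, Pi.mul_apply, Pi.mul_apply, hzero, hone] at hftc
  linarith

lemma integral_betaWeight_mul_sub_eq (hα : -1 < α) (hβ : -1 < β)
    (hg : ∀ x ∈ Set.Icc (0 : ℝ) 1, HasDerivAt g (g' x) x) (hg' : ContinuousOn g' (Set.Icc 0 1)) :
    (α + 1) * ∫ x in (0 : ℝ)..1, betaWeight α β x * (g x - g 1) =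
      -∫ x in (0 : ℝ)..1, betaWeight (α + 1) β x * (β * dslope g 1 x + g' x) := by
  have hslope := continuousOn_dslope_of_differentiableAt 1
    fun x hx => (hg x hx).differentiableAt
  have hgc : ContinuousOn g (Set.Icc 0 1) := fun x hx => (hg x hx).continuousAt.continuousWithinAt
  have hdiff (x : ℝ) : (x - 1) * dslope g 1 x = g x - g 1 := sub_smul_dslope g 1 x
  have hweight : ∀ x ∈ Set.Ioo (0 : ℝ) 1,
      betaWeight (α + 1) (β + 1) x * ((g' x - dslope g 1 x) / (x - 1)) =
        betaWeight (α + 1) β x * (dslope g 1 x - g' x) := by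
    intro x hx
    have hne : x - 1 ≠ 0 := sub_ne_zero.2 hx.2.ne
    rw [betaWeight_add_one_right hx.2.ne]
    field_simp
    ring
  have hint : IntervalIntegrable (fun x => betaWeight (α + 1) β x * (dslope g 1 x - g' x))
      volume 0 1 := intervalIntegrable_betaWeight_mul (by linarith) hβ (hslope.sub hg')
  have hparts := integral_betaWeight_mul_deriv hα hβ hslope
    (fun x hx => hasDerivAt_dslope_of_ne hx.2.ne (hg x ⟨hx.1.le, hx.2.le⟩))
    (hint.congr_uIoo fun x hx => (hweight x (by rwa [Set.uIoo_of_le zero_le_one] at hx)).symm)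
  rw [intervalIntegral.integral_congr_Ioo_of_le zero_le_one hweight] at hparts
  rw [← intervalIntegral.integral_const_mul, eq_neg_iff_add_eq_zero,
    ← intervalIntegral.integral_add
      ((intervalIntegrable_betaWeight_mul hα hβ (by fun_prop)).const_mul _)
      (intervalIntegrable_betaWeight_mul (by linarith) hβ (by fun_prop))]
  refine Eq.trans ?_ (sub_eq_zero.2 hparts.symm)
  rw [← intervalIntegral.integral_sub
    (intervalIntegrable_betaWeight_mul hα hβ (by fun_prop)) hint]
  refine intervalIntegral.integral_congr_Ioo_of_le zero_le_one fun x hx => ?_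
  simp only [← hdiff, betaWeight_add_one_left hx.1.ne']
  ring

lemma integral_betaWeight_mul_neg_deriv_le (hα : -1 < α) (hβ : -1 < β) (hβ₀ : β ≤ 0)
    (hconvex : ConvexOn ℝ (Set.Icc 0 1) g) (hg : ∀ x ∈ Set.Icc (0 : ℝ) 1, HasDerivAt g (g' x) x)
    (hg' : ContinuousOn g' (Set.Icc 0 1)) :
    (β + 1) * ∫ x in (0 : ℝ)..1, betaWeight (α + 1) β x * -g' x ≤
      (α + 1) * ∫ x in (0 : ℝ)..1, betaWeight α β x * (g x - g 1) := by
  have hslope := continuousOn_dslope_of_differentiableAt 1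
    fun x hx => (hg x hx).differentiableAt
  rw [integral_betaWeight_mul_sub_eq hα hβ hg hg', ← intervalIntegral.integral_const_mul,
    ← intervalIntegral.integral_neg]
  refine intervalIntegral.integral_mono_on_of_le_Ioo zero_le_one
    ((intervalIntegrable_betaWeight_mul (by linarith) hβ hg'.neg).const_mul _)
    (intervalIntegrable_betaWeight_mul (by linarith) hβ (by fun_prop)).neg fun x hx => ?_
  have htangent : g' x ≤ dslope g 1 x := by
    rw [dslope_of_ne g hx.2.ne, slope_comm]
    exact hconvex.le_slope_of_hasDerivAt ⟨hx.1.le, hx.2.le⟩ (Set.right_mem_Icc.2 zero_le_one) hx.2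
      (hg x ⟨hx.1.le, hx.2.le⟩)
  calc (β + 1) * (betaWeight (α + 1) β x * -g' x)
      = -(betaWeight (α + 1) β x * (β * g' x + g' x)) := by ring
    _ ≤ -(betaWeight (α + 1) β x * (β * dslope g 1 x + g' x)) := by
      have hweight := (betaWeight_pos (α := α + 1) (β := β) hx).le
      exact neg_le_neg (mul_le_mul_of_nonneg_left
        (add_le_add_left (mul_le_mul_of_nonpos_left htangent hβ₀) _) hweight)

end BetaWeight

lemma convexOn_rpow_of_nonpos {p : ℝ} (hp : p ≤ 0) :
    ConvexOn ℝ (Set.Ioi 0) fun x : ℝ => x ^ p := by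
  refine MonotoneOn.convexOn_of_deriv (convex_Ioi 0)
    (fun x hx => (continuousAt_rpow_const x p (Or.inl (ne_of_gt hx))).continuousWithinAt)
    ?_ ?_ <;> rw [interior_Ioi]
  · exact fun x hx => (differentiableAt_rpow_const_of_ne p (ne_of_gt hx)).differentiableWithinAt
  · intro x hx y _ hxy
    rw [Real.deriv_rpow_const, Real.deriv_rpow_const]
    exact mul_le_mul_of_nonpos_left (rpow_le_rpow_of_nonpos hx hxy (by linarith)) hp

section EulerIntegral

/-- Euler's integral for the hypergeometric function: up to a beta-function factor this is
`F (c, α + 1; α + β + 2; -w)`. -/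
noncomputable def eulerIntegral (α β c w : ℝ) : ℝ :=
  ∫ x in (0 : ℝ)..1, betaWeight α β x * (1 + w * x) ^ (-c)

/-- The function `φ` of the paper, with `α = p / 2 + a`, `β = b` and `c = p / 2 + n / 2 + e + 2`. -/
noncomputable def eulerRatio (α β c w : ℝ) : ℝ :=
  w * eulerIntegral (α + 1) β c w / eulerIntegral α β c w

variable {α β c w x : ℝ}

lemma one_add_mul_pos (hw : -1 < w) (hx : x ∈ Set.Icc (0 : ℝ) 1) : 0 < 1 + w * x := by
  rcases hx.1.eq_or_lt with rfl | hx₀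
  · simp
  · nlinarith [mul_pos hx₀ (neg_lt_iff_pos_add.1 hw), hx.2]

lemma hasDerivAt_one_add_mul_rpow (hx : 0 < 1 + w * x) :
    HasDerivAt (fun x => (1 + w * x) ^ (-c)) (-(c * w) * (1 + w * x) ^ (-(c + 1))) x := by
  have hlin : HasDerivAt (fun x => 1 + w * x) w x := by
    simpa using ((hasDerivAt_id x).const_mul w).const_add 1
  refine (hlin.rpow_const (p := -c) (Or.inl hx.ne')).congr_deriv ?_
  rw [neg_add']
  ring

lemma continuousOn_one_add_mul_rpow (hw : -1 < w) :
    ContinuousOn (fun x => (1 + w * x) ^ (-c)) (Set.Icc 0 1) := fun _ hx =>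
  (hasDerivAt_one_add_mul_rpow (one_add_mul_pos hw hx)).continuousAt.continuousWithinAt

lemma convexOn_one_add_mul_rpow (hw : -1 < w) (hc : 0 ≤ c) :
    ConvexOn ℝ (Set.Icc 0 1) fun x => (1 + w * x) ^ (-c) := by
  have hcomp := (convexOn_rpow_of_nonpos (neg_nonpos.2 hc)).comp_affineMap
    (AffineMap.lineMap 1 (1 + w))
  have hline (x : ℝ) : AffineMap.lineMap 1 (1 + w) x = 1 + w * x := by
    rw [AffineMap.lineMap_apply_ring']
    ring
  simp only [Function.comp_def, hline] at hcomp
  exact hcomp.subset (fun x hx => Set.mem_preimage.2 ((hline x).symm ▸ one_add_mul_pos hw hx))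
    (convex_Icc 0 1)

lemma intervalIntegrable_eulerKernel (hα : -1 < α) (hβ : -1 < β) (hw : -1 < w) :
    IntervalIntegrable (fun x => betaWeight α β x * (1 + w * x) ^ (-c)) volume 0 1 :=
  intervalIntegrable_betaWeight_mul hα hβ (continuousOn_one_add_mul_rpow hw)

lemma eulerIntegral_pos (hα : -1 < α) (hβ : -1 < β) (hw : -1 < w) : 0 < eulerIntegral α β c w :=
  intervalIntegral.intervalIntegral_pos_of_pos_on (intervalIntegrable_eulerKernel hα hβ hw)
    (fun _ hx => mul_pos (betaWeight_pos hx)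
      (rpow_pos_of_pos (one_add_mul_pos hw (Set.Ioo_subset_Icc_self hx)) _)) zero_lt_one

lemma eulerIntegral_add_one_right (hα : -1 < α) (hβ : -1 < β) (hw : -1 < w) :
    eulerIntegral α (β + 1) c w = eulerIntegral α β c w - eulerIntegral (α + 1) β c w := by
  unfold eulerIntegral
  rw [← intervalIntegral.integral_sub (intervalIntegrable_eulerKernel hα hβ hw)
    (intervalIntegrable_eulerKernel (by linarith) hβ hw)]
  refine intervalIntegral.integral_congr_Ioo_of_le zero_le_one fun x hx => ?_
  simp only [betaWeight_add_one_right hx.2.ne, betaWeight_add_one_left hx.1.ne']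
  ring

lemma eulerIntegral_add_one_left_lt (hα : -1 < α) (hβ : -1 < β) (hw : -1 < w) :
    eulerIntegral (α + 1) β c w < eulerIntegral α β c w := by
  have hpos := eulerIntegral_pos (c := c) hα (show -1 < β + 1 by linarith) hw
  rwa [eulerIntegral_add_one_right hα hβ hw, sub_pos] at hpos

lemma eulerIntegral_contiguous (hα : -1 < α) (hβ : -1 < β) (hw : -1 < w) :
    (α + 1) * eulerIntegral α β c w - (α + β + 2) * eulerIntegral (α + 1) β c w =
      c * w * eulerIntegral (α + 1) (β + 1) (c + 1) w := by
  have hker := intervalIntegrable_eulerKernel (c := c) hα hβ hw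
  have hker₁ := intervalIntegrable_eulerKernel (α := α + 1) (c := c) (by linarith) hβ hw
  have hparts := integral_betaWeight_mul_deriv hα hβ (continuousOn_one_add_mul_rpow (c := c) hw)
    (fun x hx => hasDerivAt_one_add_mul_rpow (one_add_mul_pos hw (Set.Ioo_subset_Icc_self hx)))
    (intervalIntegrable_betaWeight_mul (by linarith) (by linarith)
      ((continuousOn_one_add_mul_rpow hw).const_mul _))
  have hleft : ∫ x in (0 : ℝ)..1,
      betaWeight (α + 1) (β + 1) x * (-(c * w) * (1 + w * x) ^ (-(c + 1))) =
        -(c * w) * eulerIntegral (α + 1) (β + 1) (c + 1) w := by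
    simp only [eulerIntegral, ← intervalIntegral.integral_const_mul, mul_left_comm]
  have hright : ∫ x in (0 : ℝ)..1,
      betaWeight α β x * (((α + β + 2) * x - (α + 1)) * (1 + w * x) ^ (-c)) =
        (α + β + 2) * eulerIntegral (α + 1) β c w - (α + 1) * eulerIntegral α β c w := by
    simp only [eulerIntegral, ← intervalIntegral.integral_const_mul]
    rw [← intervalIntegral.integral_sub (hker₁.const_mul _) (hker.const_mul _)]
    refine intervalIntegral.integral_congr_Ioo_of_le zero_le_one fun x hx => ?_
    simp only [betaWeight_add_one_left hx.1.ne']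
    ring
  linarith

lemma mul_eulerIntegral_add_one_le (hα : -1 < α) (hβ : -1 < β) (hβ₀ : β ≤ 0) (hw : -1 < w)
    (hc : 0 ≤ c) :
    (β + 1) * (c * w * eulerIntegral (α + 1) β (c + 1) w) ≤ (α + 1) * eulerIntegral α β c w := by
  have hcont := continuousOn_one_add_mul_rpow (c := c) hw
  calc (β + 1) * (c * w * eulerIntegral (α + 1) β (c + 1) w)
      = (β + 1) * ∫ x in (0 : ℝ)..1,
          betaWeight (α + 1) β x * -(-(c * w) * (1 + w * x) ^ (-(c + 1))) := by
        simp only [eulerIntegral, ← intervalIntegral.integral_const_mul, neg_mul, neg_neg,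
          mul_left_comm]
    _ ≤ (α + 1) * ∫ x in (0 : ℝ)..1,
          betaWeight α β x * ((1 + w * x) ^ (-c) - (1 + w * 1) ^ (-c)) :=
        integral_betaWeight_mul_neg_deriv_le hα hβ hβ₀ (convexOn_one_add_mul_rpow hw hc)
          (fun x hx => hasDerivAt_one_add_mul_rpow (one_add_mul_pos hw hx))
          ((continuousOn_one_add_mul_rpow hw).const_mul _)
    _ ≤ (α + 1) * eulerIntegral α β c w := by
        refine mul_le_mul_of_nonneg_left ?_ (by linarith)
        refine intervalIntegral.integral_mono_on_of_le_Ioo zero_le_one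
          (intervalIntegrable_betaWeight_mul hα hβ (by fun_prop))
          (intervalIntegrable_eulerKernel hα hβ hw) fun x hx => ?_
        have hend := rpow_nonneg
          (one_add_mul_pos hw (Set.right_mem_Icc.2 zero_le_one)).le (-c)
        exact mul_le_mul_of_nonneg_left (sub_le_self _ hend) (betaWeight_pos hx).le

lemma hasDerivAt_eulerIntegral (hα : -1 < α) (hβ : -1 < β) (hw : -1 < w) :
    HasDerivAt (eulerIntegral α β c) (-c * eulerIntegral (α + 1) β (c + 1) w) w := by
  have hnhds : Set.Icc ((w - 1) / 2) (w + 1) ∈ nhds w := Icc_mem_nhds (by linarith) (by linarith)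
  have hker : ContinuousOn (fun z : ℝ × ℝ => -(c * z.2) * (1 + z.1 * z.2) ^ (-(c + 1)))
      (Set.Icc ((w - 1) / 2) (w + 1) ×ˢ Set.Icc 0 1) := by
    refine ContinuousOn.mul (by fun_prop) (ContinuousOn.rpow_const (by fun_prop) fun z hz => ?_)
    exact Or.inl (one_add_mul_pos (by linarith [hz.1.1]) hz.2).ne'
  obtain ⟨K, hK⟩ := (isCompact_Icc.prod isCompact_Icc).exists_bound_of_continuousOn hker
  have hderiv := (intervalIntegral.hasDerivAt_integral_of_dominated_loc_of_deriv_le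
    (F := fun y x => betaWeight α β x * (1 + y * x) ^ (-c))
    (F' := fun y x => betaWeight α β x * (-(c * x) * (1 + y * x) ^ (-(c + 1))))
    (bound := fun x => ‖betaWeight α β x‖ * K) hnhds ?_ (intervalIntegrable_eulerKernel hα hβ hw)
    ?_ ?_ ((intervalIntegrable_betaWeight hα hβ).norm.mul_const K) ?_).2
  · refine hderiv.congr_deriv ?_
    rw [eulerIntegral, ← intervalIntegral.integral_const_mul]
    refine intervalIntegral.integral_congr_Ioo_of_le zero_le_one fun x hx => ?_
    simp only [betaWeight_add_one_left hx.1.ne']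
    ring
  · filter_upwards [lt_mem_nhds hw] with y hy
    exact (intervalIntegrable_iff.1 (intervalIntegrable_eulerKernel hα hβ hy)).aestronglyMeasurable
  · unfold betaWeight
    exact Measurable.aestronglyMeasurable (by fun_prop)
  · refine Eventually.of_forall fun x hx y hy => ?_
    rw [Set.uIoc_of_le zero_le_one] at hx
    rw [norm_mul]
    exact mul_le_mul_of_nonneg_left (hK (y, x) ⟨hy, hx.1.le, hx.2⟩) (norm_nonneg _)
  · refine Eventually.of_forall fun x hx y hy => ?_
    rw [Set.uIoc_of_le zero_le_one] at hx
    have hpos : 0 < 1 + x * y := by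
      rw [mul_comm]
      exact one_add_mul_pos (by linarith [hy.1]) ⟨hx.1.le, hx.2⟩
    simpa only [mul_comm x] using (hasDerivAt_one_add_mul_rpow hpos).const_mul (betaWeight α β x)

lemma mul_logDeriv_eulerRatio (hα : -1 < α) (hβ : -1 < β) (hw : -1 < w) (hw₀ : w ≠ 0) :
    w * logDeriv (eulerRatio α β c) w =
      1 - c * w * eulerIntegral (α + 1 + 1) β (c + 1) w / eulerIntegral (α + 1) β c w +
        c * w * eulerIntegral (α + 1) β (c + 1) w / eulerIntegral α β c w := by
  have hα₁ : -1 < α + 1 := by linarith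
  have hA := hasDerivAt_eulerIntegral (c := c) hα hβ hw
  have hB := hasDerivAt_eulerIntegral (c := c) hα₁ hβ hw
  have hA₀ := (eulerIntegral_pos (c := c) hα hβ hw).ne'
  have hB₀ := (eulerIntegral_pos (c := c) hα₁ hβ hw).ne'
  have hlog : logDeriv (eulerRatio α β c) w =
      1 / w + logDeriv (eulerIntegral (α + 1) β c) w - logDeriv (eulerIntegral α β c) w := by
    rw [← logDeriv_id' w, ← logDeriv_mul w hw₀ hB₀ differentiableAt_fun_id hB.differentiableAt]
    exact logDeriv_div w (mul_ne_zero hw₀ hB₀) hA₀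
      (differentiableAt_fun_id.mul hB.differentiableAt) hA.differentiableAt
  rw [hlog, logDeriv_apply, logDeriv_apply, hA.deriv, hB.deriv]
  field_simp
  ring

lemma mul_logDeriv_eulerRatio_eq_neg_add_mul (hα : -1 < α) (hβ : -1 < β) (hw : -1 < w)
    (hw₀ : w ≠ 0) :
    w * logDeriv (eulerRatio α β c) w =
      -β + (α + 1 - c * w * eulerIntegral (α + 1) β (c + 1) w / eulerIntegral α β c w) *
        (eulerIntegral α β c w / eulerIntegral (α + 1) β c w - 1) := by
  have hα₁ : -1 < α + 1 := by linarith
  have hA₀ := (eulerIntegral_pos (c := c) hα hβ hw).ne'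
  have hB₀ := (eulerIntegral_pos (c := c) hα₁ hβ hw).ne'
  have hcont := eulerIntegral_contiguous (c := c) hα hβ hw
  rw [eulerIntegral_add_one_right hα₁ hβ hw] at hcont
  rw [mul_logDeriv_eulerRatio hα hβ hw hw₀]
  field_simp
  linear_combination -(eulerIntegral α β c w) * hcont

theorem le_mul_logDeriv_eulerRatio (hα : -1 < α) (hβ : -1 < β) (hβ₀ : β ≤ 0) (hw : 0 < w) :
    (α + 2) * β / (β + 1) ≤ w * logDeriv (eulerRatio α β c) w := by
  have hw₁ : -1 < w := by linarith
  have hβ₁ : 0 < β + 1 := by linarith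
  have hA := eulerIntegral_pos (c := c) hα hβ hw₁
  have hB := eulerIntegral_pos (α := α + 1) (c := c) (by linarith) hβ hw₁
  have hP := eulerIntegral_pos (α := α + 1) (c := c + 1) (by linarith) hβ hw₁
  rcases le_or_gt (c * w * eulerIntegral (α + 1) β (c + 1) w / eulerIntegral α β c w) (α + 1)
    with hle | hgt
  · have hquot : 1 ≤ eulerIntegral α β c w / eulerIntegral (α + 1) β c w :=
      (one_le_div hB).2 (eulerIntegral_add_one_left_lt hα hβ hw₁).le
    calc (α + 2) * β / (β + 1) ≤ 0 := div_nonpos_of_nonpos_of_nonneg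
          (mul_nonpos_of_nonneg_of_nonpos (by linarith) hβ₀) hβ₁.le
      _ ≤ w * logDeriv (eulerRatio α β c) w := by
        rw [mul_logDeriv_eulerRatio_eq_neg_add_mul hα hβ hw₁ hw.ne']
        exact add_nonneg (by linarith) (mul_nonneg (sub_nonneg.2 hle) (sub_nonneg.2 hquot))
  · have hc : 0 < c := by
      by_contra! hc
      have : c * w * eulerIntegral (α + 1) β (c + 1) w / eulerIntegral α β c w ≤ 0 :=
        div_nonpos_of_nonpos_of_nonneg (mul_nonpos_of_nonpos_of_nonneg
          (mul_nonpos_of_nonpos_of_nonneg hc hw.le) hP.le) hA.le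
      linarith
    have hconvex := mul_eulerIntegral_add_one_le (α := α + 1) (by linarith) hβ hβ₀ hw₁ hc.le
    have hQ : c * w * eulerIntegral (α + 1 + 1) β (c + 1) w / eulerIntegral (α + 1) β c w ≤
        (α + 2) / (β + 1) := by
      rw [div_le_div_iff₀ hB hβ₁]
      linarith
    calc (α + 2) * β / (β + 1) = 1 - (α + 2) / (β + 1) + (α + 1) := by field_simp; ring
      _ ≤ w * logDeriv (eulerRatio α β c) w := by
        rw [mul_logDeriv_eulerRatio hα hβ hw₁ hw.ne']
        gcongr

end EulerIntegral

theorem stmt_14_general {α β c : ℝ} (hα : -1 < α) (hβ : -1 < β) (hβ₀ : β ≤ 0) {φ : ℝ → ℝ}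
    (hφ : ∀ w > (0 : ℝ), φ w =
      w * (∫ x in (0 : ℝ)..1, x ^ (α + 1) * (1 - x) ^ β * (1 + w * x) ^ (-c)) /
        (∫ x in (0 : ℝ)..1, x ^ α * (1 - x) ^ β * (1 + w * x) ^ (-c))) :
    ∀ w > (0 : ℝ), (α + 2) * β / (β + 1) ≤ w * deriv φ w / φ w := by
  intro w hw
  have heq : φ =ᶠ[nhds w] eulerRatio α β c := by
    filter_upwards [lt_mem_nhds hw] with y hy using hφ y hy
  rw [mul_div_assoc w, ← logDeriv_apply, (logDeriv_congr_nhds heq).eq_of_nhds]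
  exact le_mul_logDeriv_eulerRatio hα hβ hβ₀ hw

theorem stmt_14 (p n : ℕ) (hp : 3 ≤ p) (hn : 1 ≤ n) (a b e : ℝ)
    (he : -(p:ℝ)/2 - (n:ℝ)/2 - 1 < e) (ha1 : -(p:ℝ)/2 - 1 < a) (ha2 : a < (n:ℝ)/2 + e)
    (hb1 : -1 < b) (hb2 : b < min ((n:ℝ)/2 + e - a - 1) 0) (φ : ℝ → ℝ)
    (hφ : ∀ w > (0:ℝ), φ w =
      w * (∫ l in (0:ℝ)..1, l ^ ((p:ℝ)/2 + a + 1) * (1 - l) ^ b *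
            (1 + w * l) ^ (-((p:ℝ)/2 + (n:ℝ)/2 + e + 2))) /
          (∫ l in (0:ℝ)..1, l ^ ((p:ℝ)/2 + a) * (1 - l) ^ b *
            (1 + w * l) ^ (-((p:ℝ)/2 + (n:ℝ)/2 + e + 2)))) :
    ∀ w > (0:ℝ), ((p:ℝ)/2 + a + 2) * b / (b + 1) ≤ w * deriv φ w / φ w := by
  exact stmt_14_general (by linarith) hb1 (hb2.le.trans (min_le_right _ _)) hφ
end
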